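/- Let r ≥ 2 and let H be an r-regular 3-partite 3-graph with n vertices in each vertex class. If H does not contain a copy of (r/2)·F, where F is the truncated Fano plane, then ν(H) ≥ (1 + 1/(22r − 77/3))·n/2. -/

import Mathlib

namespace Tripartite

/-- The degree of a vertex `a` in the first class of a 3-partite 3-multihypergraph,
whose edges are given as a multiset of triples (so parallel edges are allowed). -/
def deg1 {α β γ : Type*} [DecidableEq α] (H : Multiset (α × β × γ)) (a : α) : ℕ :=
  (H.filter fun e => e.1 = a).card

/-- The degree of a vertex `b` in the second class. -/
def deg2 {α β γ : Type*} [DecidableEq β] (H : Multiset (α × β × γ)) (b : β) : ℕ :=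
  (H.filter fun e => e.2.1 = b).card

/-- The degree of a vertex `c` in the third class. -/
def deg3 {α β γ : Type*} [DecidableEq γ] (H : Multiset (α × β × γ)) (c : γ) : ℕ :=
  (H.filter fun e => e.2.2 = c).card

/-- `H` is `r`-regular: every vertex of every class has degree exactly `r`. -/
def IsRegular {α β γ : Type*} [DecidableEq α] [DecidableEq β] [DecidableEq γ]
    (H : Multiset (α × β × γ)) (r : ℕ) : Prop :=
  (∀ a, deg1 H a = r) ∧ (∀ b, deg2 H b = r) ∧ (∀ c, deg3 H c = r)

/-- A matching of `H`: a set of edges of `H` that are pairwise disjoint. -/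
def IsMatching {α β γ : Type*} (H : Multiset (α × β × γ)) (M : Finset (α × β × γ)) : Prop :=
  (∀ e ∈ M, e ∈ H) ∧
  ∀ e ∈ M, ∀ f ∈ M, e ≠ f → e.1 ≠ f.1 ∧ e.2.1 ≠ f.2.1 ∧ e.2.2 ≠ f.2.2

/-- The matching number ν(H): the maximum size of a matching of `H`. -/
noncomputable def matchNum {α β γ : Type*} (H : Multiset (α × β × γ)) : ℕ :=
  sSup {k | ∃ M : Finset (α × β × γ), IsMatching H M ∧ M.card = k}

/-- The edge multiset of the truncated Fano plane `F` on vertices `x1, y1` (first class),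
`x2, y2` (second class), `x3, y3` (third class). -/
def fanoEdges {α β γ : Type*} (x1 y1 : α) (x2 y2 : β) (x3 y3 : γ) :
    Multiset (α × β × γ) :=
  {(x1, x2, x3), (x1, y2, y3), (y1, x2, y3), (y1, y2, x3)}

/-- The six vertices `x1, y1, x2, y2, x3, y3` span a copy of `s • F` in `H`, i.e. a
subhypergraph in which every edge of the truncated Fano plane appears with
multiplicity (at least) `s`. -/
def IsFanoCopy {α β γ : Type*} (H : Multiset (α × β × γ)) (s : ℕ)
    (x1 y1 : α) (x2 y2 : β) (x3 y3 : γ) : Prop :=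
  x1 ≠ y1 ∧ x2 ≠ y2 ∧ x3 ≠ y3 ∧ s • fanoEdges x1 y1 x2 y2 x3 y3 ≤ H

/-- The six vertices `x1, y1, x2, y2, x3, y3` span a connected component of `H` that is a
copy of `s • F`: the multiset of edges of `H` meeting one of these six vertices is exactly
`s` parallel copies of each of the four edges of the truncated Fano plane. -/
def IsFanoComponent {α β γ : Type*} [DecidableEq α] [DecidableEq β] [DecidableEq γ]
    (H : Multiset (α × β × γ)) (s : ℕ)
    (x1 y1 : α) (x2 y2 : β) (x3 y3 : γ) : Prop :=
  x1 ≠ y1 ∧ x2 ≠ y2 ∧ x3 ≠ y3 ∧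
  H.filter (fun e => e.1 = x1 ∨ e.1 = y1 ∨ e.2.1 = x2 ∨ e.2.1 = y2 ∨
      e.2.2 = x3 ∨ e.2.2 = y3)
    = s • fanoEdges x1 y1 x2 y2 x3 y3

/-!
Call a copy of the truncated Fano plane a tile. Since a tile has an edge avoiding one prescribed
vertex in each class as soon as one class is left unconstrained, a packing of disjoint single edges
and tiles can be turned into a matching with as many edges as the packing has members, even when new
edges have used up some vertices of the tiles, as long as every tile keeps an unused class. Take a
packing whose number of members is maximum and, among those, one with as many tiles as possible.
Then every edge that is not a tile edge meets a single edge. The links of a single edge `e` (edges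
that meet the single edges only in one vertex of `e` and contain a free vertex) contain at most
`2 * r` free vertices in total, counted with multiplicity, since otherwise `e` and three free
vertices would span a new tile.

Now let every edge collect weight `2` for each of its vertices on a single edge, `1` for each of its
vertices on a tile, `1` for each of its free vertices if it is a link, and `1` if it is a tile edge.
Every edge collects at least `4`, and a single edge collects at least `5`. On the other hand, single
edges pay at most `6 * r + 2 * r` each, and tiles at most `6 * r + (2 * r - 1)`, because a tile with
`2 * r` edges would be a copy of `(r/2) • F`. Hence `4 * |E| ≤ (8 * r - 1) * ν`.
-/

section Pattern

open Finset

/-- A pattern `s` selects one of two vertices in each class: `x i` if `s i = false` and `y i` if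
`s i = true`. The edges of the truncated Fano plane are the four patterns with an even number of
`y`s. -/
def IsEvenPattern (s : Fin 3 → Bool) : Prop :=
  Even #{i | s i}

instance : DecidablePred IsEvenPattern := fun s => inferInstanceAs (Decidable (Even #{i | s i}))

lemma IsEvenPattern.update_not :
    ∀ {s : Fin 3 → Bool}, ¬ IsEvenPattern s →
      ∀ i, IsEvenPattern (Function.update s i (!s i)) := by
  decide

lemma IsEvenPattern.compl :
    ∀ {s : Fin 3 → Bool}, ¬ IsEvenPattern s → IsEvenPattern fun i => !s i := by
  decide

lemma IsEvenPattern.eq_or :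
    ∀ {s : Fin 3 → Bool}, IsEvenPattern s →
      s = ![false, false, false] ∨ s = ![false, true, true] ∨
        s = ![true, false, true] ∨ s = ![true, true, false] := by
  decide

lemma exists_isEvenPattern_apply_eq : ∀ i b, ∃ s, IsEvenPattern s ∧ s i = b := by
  decide

lemma exists_isEvenPattern_forall {P : Fin 3 → Bool → Prop} (h : ∀ i, ∃ b, P i b)
    (h' : ∃ i, ∀ b, P i b) : ∃ s, IsEvenPattern s ∧ ∀ i, P i (s i) := by
  choose s hs using h
  obtain ⟨i, hi⟩ := h'
  by_cases heven : IsEvenPattern s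
  · exact ⟨s, heven, hs⟩
  · refine ⟨Function.update s i (!s i), .update_not heven i, fun j => ?_⟩
    rcases eq_or_ne j i with rfl | hj
    · exact hi _
    · simpa [Function.update_of_ne hj] using hs j

variable {V : Type*} {C : Fin 3 → Bool → V}

lemma exists_isEvenPattern_ne (hC : ∀ i, (C i).Injective) {x : Fin 3 → V}
    (hx : ¬ ∃ s, IsEvenPattern s ∧ ∀ i, x i = C i (s i)) :
    ∃ s, IsEvenPattern s ∧ ∀ i, x i ≠ C i (s i) := by
  by_cases hmiss : ∃ i, ∀ b, x i ≠ C i b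
  · exact exists_isEvenPattern_forall (fun i => ((hC i).exists_ne (x i)).imp fun _ => .symm) hmiss
  · push Not at hmiss
    choose s hs using hmiss
    exact ⟨fun i => !s i, .compl fun heven => hx ⟨s, heven, hs⟩,
      fun i h => by simpa using hC i ((hs i).symm.trans h)⟩

lemma exists_isEvenPattern_ne_ne (hC : ∀ i, (C i).Injective) {x y : Fin 3 → V}
    (h : ∀ i, (∀ b, x i ≠ C i b) ∨ ∀ b, y i ≠ C i b)
    (h' : ∃ i, (∀ b, x i ≠ C i b) ∧ ∀ b, y i ≠ C i b) :
    ∃ s, IsEvenPattern s ∧ ∀ i, x i ≠ C i (s i) ∧ y i ≠ C i (s i) := by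
  refine exists_isEvenPattern_forall (P := fun i b => x i ≠ C i b ∧ y i ≠ C i b) (fun i => ?_)
    (h'.imp fun _ hi b => ⟨hi.1 b, hi.2 b⟩)
  rcases h i with hx | hy
  · obtain ⟨b, hb⟩ := (hC i).exists_ne (y i)
    exact ⟨b, hx b, hb.symm⟩
  · obtain ⟨b, hb⟩ := (hC i).exists_ne (x i)
    exact ⟨b, hb.symm, hy b⟩

end Pattern

section Packing

open Finset

variable {E V : Type*} (v : E → Fin 3 → V)

/-- Disjointness of two edges of the 3-partite 3-graph with edges indexed by `E`, where `v e i` is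
the vertex of `e` in class `i`. All classes share the vertex type `V`, a vertex of the hypergraph
being a pair of a class and an element of `V`. -/
def EdgeDisjoint (e f : E) : Prop :=
  ∀ i, v e i ≠ v f i

/-- Matchings of an indexed 3-partite 3-graph, as sets of indices. -/
def IsEdgeMatching (M : Finset E) : Prop :=
  (M : Set E).Pairwise (EdgeDisjoint v)

/-- The edge `f` is one of the four edges of the truncated Fano plane with vertices `C i b`. -/
def IsTileEdge (C : Fin 3 → Bool → V) (f : E) : Prop :=
  ∃ s, IsEvenPattern s ∧ ∀ i, v f i = C i (s i)

/-- A *tile*: the vertices `C i b` span a copy of the truncated Fano plane. -/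
structure IsTile (C : Fin 3 → Bool → V) : Prop where
  injective : ∀ i, (C i).Injective
  exists_edge : ∀ s, IsEvenPattern s → ∃ f, ∀ i, v f i = C i (s i)

/-- Disjointness of two tiles. -/
def TileDisjoint (C D : Fin 3 → Bool → V) : Prop :=
  ∀ i b b', C i b ≠ D i b'

/-- A packing of pairwise disjoint single edges `N` and tiles `T`. -/
structure IsPacking (N : Finset E) (T : Finset (Fin 3 → Bool → V)) : Prop where
  isEdgeMatching : IsEdgeMatching v N
  isTile : ∀ C ∈ T, IsTile v C
  tileDisjoint : (T : Set (Fin 3 → Bool → V)).Pairwise TileDisjoint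
  edge_ne_tile : ∀ e ∈ N, ∀ C ∈ T, ∀ i b, v e i ≠ C i b

/-- A packing with as many members as a maximum matching has edges. -/
structure IsMaximumPacking (N : Finset E) (T : Finset (Fin 3 → Bool → V)) : Prop
    extends IsPacking v N T where
  card_le : ∀ M, IsEdgeMatching v M → #M ≤ #N + #T

/-- A maximum packing with as many tiles as possible. -/
structure IsOptimalPacking (N : Finset E) (T : Finset (Fin 3 → Bool → V)) : Prop
    extends IsMaximumPacking v N T where
  card_tiles_le : ∀ N' T', IsPacking v N' T' → #N' + #T' = #N + #T → #T' ≤ #T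

variable {v} {N : Finset E} {T : Finset (Fin 3 → Bool → V)}

lemma EdgeDisjoint.symm {e f : E} (h : EdgeDisjoint v e f) : EdgeDisjoint v f e :=
  fun i => (h i).symm

lemma EdgeDisjoint.ne {e f : E} (h : EdgeDisjoint v e f) : e ≠ f :=
  fun hef => h 0 (by rw [hef])

@[simp]
lemma isEdgeMatching_empty : IsEdgeMatching v ∅ := by
  simp [IsEdgeMatching]

@[simp]
lemma isEdgeMatching_singleton (e : E) : IsEdgeMatching v {e} := by
  simp [IsEdgeMatching]

lemma IsEdgeMatching.mono {M M' : Finset E} (h : IsEdgeMatching v M) (hM' : M' ⊆ M) :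
    IsEdgeMatching v M' :=
  Set.Pairwise.mono (mod_cast hM') h

lemma isEdgeMatching_pair [DecidableEq E] {e f : E} (h : EdgeDisjoint v e f) :
    IsEdgeMatching v {e, f} := by
  simpa [IsEdgeMatching, Set.pairwise_pair] using fun _ => ⟨h, h.symm⟩

lemma disjoint_of_edgeDisjoint {M M' : Finset E}
    (h : ∀ e ∈ M, ∀ f ∈ M', EdgeDisjoint v e f) : Disjoint M M' :=
  disjoint_left.2 fun e he he' => (h e he e he').ne rfl

lemma IsEdgeMatching.union [DecidableEq E] {M M' : Finset E} (hM : IsEdgeMatching v M)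
    (hM' : IsEdgeMatching v M') (h : ∀ e ∈ M, ∀ f ∈ M', EdgeDisjoint v e f) :
    IsEdgeMatching v (M ∪ M') := by
  rw [IsEdgeMatching, coe_union, Set.pairwise_union]
  exact ⟨hM, hM', fun e he f hf _ => ⟨h e he f hf, (h e he f hf).symm⟩⟩

namespace IsPacking

lemma exists_tile_matching (hP : IsPacking v N T) {p : E → Prop}
    (hp : ∀ C ∈ T, ∃ f, IsTileEdge v C f ∧ p f) :
    ∃ M, IsEdgeMatching v M ∧ #M = #T ∧ ∀ f ∈ M, p f ∧ ∃ C ∈ T, IsTileEdge v C f := by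
  classical
  choose g hg hpg using hp
  have hdisj : ∀ C D : T, C ≠ D → EdgeDisjoint v (g C C.2) (g D D.2) := by
    intro C D hCD i
    obtain ⟨s, -, hs⟩ := hg C C.2
    obtain ⟨t, -, ht⟩ := hg D D.2
    rw [hs, ht]
    exact hP.tileDisjoint C.2 D.2 (Subtype.coe_ne_coe.2 hCD) i _ _
  have hinj : Function.Injective fun C : T => g C C.2 := fun C D h => by
    by_contra hCD
    exact (hdisj C D hCD).ne h
  refine ⟨T.attach.image fun C : T => g C C.2, ?_,
    by rw [card_image_of_injective _ hinj, card_attach],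
    forall_mem_image.2 fun C _ => ⟨hpg C C.2, C.1, C.2, hg C C.2⟩⟩
  rw [IsEdgeMatching, coe_image]
  rintro _ ⟨C, -, rfl⟩ _ ⟨D, -, rfl⟩ hne
  exact hdisj C D fun h => hne (by rw [h])

lemma exists_exchange (hP : IsPacking v N T) {S N' : Finset E} (hS : IsEdgeMatching v S)
    (hN' : N' ⊆ N) (hSN' : ∀ f ∈ S, ∀ e ∈ N', EdgeDisjoint v f e)
    (hT : ∀ C ∈ T, ∃ s, IsEvenPattern s ∧ ∀ f ∈ S, ∀ i, v f i ≠ C i (s i)) :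
    ∃ M, IsEdgeMatching v M ∧ #M = #S + #N' + #T := by
  classical
  have hedge : ∀ C ∈ T, ∃ g, IsTileEdge v C g ∧ ∀ f ∈ S, EdgeDisjoint v f g := by
    intro C hC
    obtain ⟨s, hs, hfs⟩ := hT C hC
    obtain ⟨g, hg⟩ := (hP.isTile C hC).exists_edge s hs
    exact ⟨g, ⟨s, hs, hg⟩, fun f hf i => hg i ▸ hfs f hf i⟩
  obtain ⟨G, hG, hGcard, hGT⟩ := hP.exists_tile_matching hedge
  have hN'G : ∀ e ∈ N', ∀ g ∈ G, EdgeDisjoint v e g := by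
    intro e he g hg i
    obtain ⟨-, C, hC, s, -, hs⟩ := hGT g hg
    rw [hs]
    exact hP.edge_ne_tile e (hN' he) C hC i _
  have hSU : ∀ f ∈ S, ∀ e ∈ N' ∪ G, EdgeDisjoint v f e := fun f hf e he =>
    (mem_union.1 he).elim (hSN' f hf e) fun he => (hGT e he).1 f hf
  refine ⟨S ∪ (N' ∪ G), hS.union ((hP.isEdgeMatching.mono hN').union hG hN'G) hSU, ?_⟩
  rw [card_union_of_disjoint (disjoint_of_edgeDisjoint hSU),
    card_union_of_disjoint (disjoint_of_edgeDisjoint hN'G), hGcard, add_assoc]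

lemma insert_tile (hP : IsPacking v N T) [DecidableEq (Fin 3 → Bool → V)] {N' : Finset E}
    (hN' : N' ⊆ N) {C : Fin 3 → Bool → V} (hC : IsTile v C)
    (hCT : ∀ D ∈ T, TileDisjoint C D) (hCN' : ∀ e ∈ N', ∀ i b, v e i ≠ C i b) :
    IsPacking v N' (insert C T) where
  isEdgeMatching := hP.isEdgeMatching.mono hN'
  isTile := forall_mem_insert _ _ _ |>.2 ⟨hC, hP.isTile⟩
  tileDisjoint := by
    rw [coe_insert, Set.pairwise_insert]
    exact ⟨hP.tileDisjoint, fun D hD _ => ⟨hCT D hD, fun i b b' => (hCT D hD i b' b).symm⟩⟩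
  edge_ne_tile e he := forall_mem_insert _ _ _ |>.2
    ⟨hCN' e he, fun D hD => hP.edge_ne_tile e (hN' he) D hD⟩

lemma exists_isEdgeMatching_card_eq (hP : IsPacking v N T) :
    ∃ M, IsEdgeMatching v M ∧ #M = #N + #T := by
  obtain ⟨M, hM, hcard⟩ := hP.exists_exchange isEdgeMatching_empty subset_rfl
    (by simp) fun C _ => ⟨![false, false, false], by decide, by simp⟩
  exact ⟨M, hM, by simpa using hcard⟩

end IsPacking

lemma exists_isMaximumPacking [Finite E] (v : E → Fin 3 → V) :
    ∃ N, IsMaximumPacking v N ∅ := by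
  classical
  have := Fintype.ofFinite E
  obtain ⟨M, hM, hmax⟩ := exists_max_image {M : Finset E | IsEdgeMatching v M} card
    ⟨∅, by simp⟩
  simp only [mem_filter, mem_univ, true_and] at hM hmax
  exact ⟨M, ⟨hM, by simp, by simp, by simp⟩, by simpa using hmax⟩

lemma exists_isOptimalPacking [Finite E] (v : E → Fin 3 → V) :
    ∃ N T, IsOptimalPacking v N T := by
  obtain ⟨M, hM⟩ := exists_isMaximumPacking v
  let tileCounts : Set ℕ := {t | ∃ N T, IsPacking v N T ∧ #N + #T = #M ∧ #T = t}
  have hbdd : BddAbove tileCounts := ⟨#M, by rintro _ ⟨N, T, -, hcard, rfl⟩; omega⟩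
  obtain ⟨N, T, hP, hcard, hT⟩ := Nat.sSup_mem (s := tileCounts) ⟨0, M, ∅, hM.1, by simp⟩ hbdd
  refine ⟨N, T, ⟨hP, fun U hU => ?_⟩, fun N' T' hP' hcard' => ?_⟩
  · simpa [hcard] using hM.card_le U hU
  · exact hT ▸ le_csSup hbdd ⟨N', T', hP', hcard'.trans hcard, rfl⟩

lemma IsMaximumPacking.exists_mem_single_of_not_isTileEdge (hP : IsMaximumPacking v N T) {f : E}
    (hf : ∀ C ∈ T, ¬ IsTileEdge v C f) : ∃ e ∈ N, ∃ i, v f i = v e i := by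
  by_contra! hfN
  obtain ⟨M, hM, hcard⟩ := hP.exists_exchange (isEdgeMatching_singleton f) subset_rfl
    (by simpa [EdgeDisjoint] using hfN) fun C hC => by
      simpa using exists_isEvenPattern_ne (hP.isTile C hC).injective (hf C hC)
  have := hP.card_le M hM
  rw [card_singleton] at hcard
  omega

lemma isTile_of_edges {e : E} {x : Fin 3 → V} (hx : ∀ i, v e i ≠ x i)
    (h : ∀ i, ∃ f, v f i = v e i ∧ ∀ j, j ≠ i → v f j = x j) :
    IsTile v fun i b => if b then x i else v e i where
  injective i := by simpa [Bool.injective_iff] using hx i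
  exists_edge s hs := by
    choose f hfe hfx using h
    rcases hs.eq_or with rfl | rfl | rfl | rfl
    · exact ⟨e, by simp [Fin.forall_fin_succ]⟩
    · exact ⟨f 0, by simp [Fin.forall_fin_succ, hfe, hfx]⟩
    · exact ⟨f 1, by simp [Fin.forall_fin_succ, hfe, hfx]⟩
    · exact ⟨f 2, by simp [Fin.forall_fin_succ, hfe, hfx]⟩

variable [DecidableEq V]

/-- The class `i` vertices of the single edges of a packing. -/
def singleVertices (v : E → Fin 3 → V) (N : Finset E) (i : Fin 3) : Finset V :=
  N.image (v · i)

/-- The class `i` vertices of the tiles of a packing. -/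
def tileVertices (T : Finset (Fin 3 → Bool → V)) (i : Fin 3) : Finset V :=
  T.biUnion fun C => univ.image (C i)

/-- The vertex `x` of class `i` is *free*: it is not covered by the packing. -/
abbrev IsFree (v : E → Fin 3 → V) (N : Finset E) (T : Finset (Fin 3 → Bool → V)) (i : Fin 3)
    (x : V) : Prop :=
  x ∉ singleVertices v N i ∧ x ∉ tileVertices T i

/-- `f` is a *link* of the single edge `e` at class `i`: `f` contains a free vertex, and the class
`i` vertex of `e` is the only vertex of `f` on a single edge. -/
structure IsLink (v : E → Fin 3 → V) (N : Finset E) (T : Finset (Fin 3 → Bool → V)) (e : E)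
    (i : Fin 3) (f : E) : Prop where
  apply_eq : v f i = v e i
  notMem_singleVertices : ∀ j, j ≠ i → v f j ∉ singleVertices v N j
  exists_isFree : ∃ j, IsFree v N T j (v f j)

lemma mem_singleVertices {i : Fin 3} {x : V} : x ∈ singleVertices v N i ↔ ∃ e ∈ N, v e i = x :=
  mem_image

lemma mem_tileVertices {i : Fin 3} {x : V} :
    x ∈ tileVertices T i ↔ ∃ C ∈ T, ∃ b, C i b = x := by
  simp only [tileVertices, mem_biUnion, mem_image, mem_univ, true_and]

lemma card_singleVertices_le (i : Fin 3) : #(singleVertices v N i) ≤ #N :=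
  card_image_le

lemma card_tileVertices_le (i : Fin 3) : #(tileVertices T i) ≤ 2 * #T := by
  rw [mul_comm]
  exact card_biUnion_le_card_mul _ _ _ fun C _ => card_image_le

lemma IsFree.ne_tile {i : Fin 3} {x : V} (hx : IsFree v N T i x) {C : Fin 3 → Bool → V}
    (hC : C ∈ T) (b : Bool) : x ≠ C i b :=
  fun h => hx.2 (mem_tileVertices.2 ⟨C, hC, b, h.symm⟩)

lemma IsFree.ne_single {i : Fin 3} {x : V} (hx : IsFree v N T i x) {e : E} (he : e ∈ N) :
    x ≠ v e i :=
  fun h => hx.1 (mem_singleVertices.2 ⟨e, he, h.symm⟩)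

namespace IsLink

variable {e f g : E} {i j l : Fin 3}

lemma ne_of_isFree (hf : IsLink v N T e i f) (he : e ∈ N) (hl : IsFree v N T l (v f l)) :
    l ≠ i := by
  rintro rfl
  exact hl.ne_single he hf.apply_eq

lemma ne_single (hf : IsLink v N T e i f) (hji : j ≠ i) {e' : E} (he' : e' ∈ N) : v f j ≠ v e' j :=
  fun h => hf.notMem_singleVertices j hji (mem_singleVertices.2 ⟨e', he', h.symm⟩)

lemma edgeDisjoint_erase [DecidableEq E] (hf : IsLink v N T e i f) (he : e ∈ N)
    (hP : IsPacking v N T) : ∀ e' ∈ N.erase e, EdgeDisjoint v f e' := by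
  intro e' he' j
  rcases eq_or_ne j i with rfl | hji
  · rw [hf.apply_eq]
    exact hP.isEdgeMatching he (mem_of_mem_erase he') (ne_of_mem_erase he').symm j
  · exact hf.ne_single hji (mem_of_mem_erase he')

lemma ne_tile (hf : IsLink v N T e i f) (he : e ∈ N) (hP : IsPacking v N T)
    {C : Fin 3 → Bool → V} (hC : C ∈ T) (b : Bool) : v f i ≠ C i b :=
  hf.apply_eq ▸ hP.edge_ne_tile e he C hC i b

/-- If `f` and `g` were disjoint, they could replace `e` in the packing. -/
lemma apply_eq_of_isFree (hf : IsLink v N T e i f) (hg : IsLink v N T e j g) (he : e ∈ N)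
    (hP : IsMaximumPacking v N T) (hij : i ≠ j) (hlj : l ≠ j) (hl : IsFree v N T l (v f l)) :
    v f l = v g l := by
  classical
  by_contra hne
  have hli : l ≠ i := hf.ne_of_isFree he hl
  have hcases : ∀ a, a = i ∨ a = l ∨ a = j := by omega
  have hfg : EdgeDisjoint v f g := by
    intro a
    rcases hcases a with rfl | rfl | rfl
    · exact hf.apply_eq ▸ (hg.ne_single hij he).symm
    · exact hne
    · exact hg.apply_eq ▸ hf.ne_single hij.symm he
  have htile : ∀ C ∈ T, ∃ s, IsEvenPattern s ∧ ∀ a, v f a ≠ C a (s a) ∧ v g a ≠ C a (s a) := by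
    intro C hC
    refine exists_isEvenPattern_ne_ne (hP.isTile C hC).injective (fun a => ?_) ?_
    · rcases hcases a with rfl | rfl | rfl
      · exact .inl (hf.ne_tile he hP.toIsPacking hC)
      · exact .inl (hl.ne_tile hC)
      · exact .inr (hg.ne_tile he hP.toIsPacking hC)
    · obtain ⟨c, hc⟩ := hg.exists_isFree
      refine ⟨c, ?_, hc.ne_tile hC⟩
      rcases hcases c with rfl | rfl | rfl
      · exact hf.ne_tile he hP.toIsPacking hC
      · exact hl.ne_tile hC
      · exact absurd rfl (hg.ne_of_isFree he hc)
  obtain ⟨M, hM, hcard⟩ := hP.exists_exchange (isEdgeMatching_pair hfg) (erase_subset e N)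
    (by simpa only [mem_insert, mem_singleton, forall_eq_or_imp, forall_eq] using
      ⟨hf.edgeDisjoint_erase he hP.1, hg.edgeDisjoint_erase he hP.1⟩)
    fun C hC => by simpa [forall_and] using htile C hC
  have := hP.card_le M hM
  have := card_erase_add_one he
  rw [card_pair hfg.ne] at hcard
  omega

end IsLink

/-- The number of vertices of `f` in a set of vertices, given as `X i` in class `i`. -/
def meetCount (v : E → Fin 3 → V) (X : Fin 3 → Finset V) (f : E) : ℕ :=
  #{i | v f i ∈ X i}

lemma meetCount_eq_three {X : Fin 3 → Finset V} {f : E} (h : ∀ i, v f i ∈ X i) :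
    meetCount v X f = 3 := by
  simp [meetCount, h]

lemma three_le_meetCount_add (v : E → Fin 3 → V) (N : Finset E) (T : Finset (Fin 3 → Bool → V))
    (f : E) :
    3 ≤ meetCount v (singleVertices v N) f + meetCount v (tileVertices T) f +
      #{l | IsFree v N T l (v f l)} := by
  have hcover : ({i | v f i ∈ singleVertices v N i} : Finset (Fin 3)) ∪
      ({i | v f i ∈ tileVertices T i} : Finset (Fin 3)) ∪
        ({l | IsFree v N T l (v f l)} : Finset (Fin 3)) = univ := by
    ext i
    simp only [mem_union, mem_filter, mem_univ, true_and, IsFree]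
    tauto
  have hcard : 3 ≤ _ := (congrArg card hcover).ge.trans (card_union_le _ _)
  exact hcard.trans (Nat.add_le_add_right (card_union_le _ _) _)

lemma isLink_of_meetCount_le_one {e f : E} {i : Fin 3} (he : e ∈ N) (hi : v f i = v e i)
    (hf : meetCount v (singleVertices v N) f ≤ 1) (hfree : ∃ l, IsFree v N T l (v f l)) :
    IsLink v N T e i f where
  apply_eq := hi
  notMem_singleVertices j hji hj :=
    hji (card_le_one.1 hf j (by simpa using hj) i
      (by simpa using mem_singleVertices.2 ⟨e, he, hi.symm⟩))
  exists_isFree := hfree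

section Count

variable [Fintype E] {r : ℕ}

open Classical in
/-- The links of `e` at any class whose vertex in class `l` is free. -/
noncomputable def freeLinks (v : E → Fin 3 → V) (N : Finset E) (T : Finset (Fin 3 → Bool → V))
    (e : E) (l : Fin 3) : Finset E :=
  {f | (∃ i, IsLink v N T e i f) ∧ IsFree v N T l (v f l)}

variable {e : E}

lemma mem_freeLinks {l : Fin 3} {f : E} :
    f ∈ freeLinks v N T e l ↔ (∃ i, IsLink v N T e i f) ∧ IsFree v N T l (v f l) := by
  simp [freeLinks]

lemma IsMaximumPacking.exists_forall_apply_eq (hP : IsMaximumPacking v N T) (he : e ∈ N)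
    {l : Fin 3} (hl : (freeLinks v N T e l).Nonempty)
    (hne : ∀ j, j ≠ l → ∃ g, IsLink v N T e j g) :
    ∃ x, IsFree v N T l x ∧ ∀ j, j ≠ l → ∀ g, IsLink v N T e j g → v g l = x := by
  obtain ⟨f, hf⟩ := hl
  obtain ⟨⟨i, hfi⟩, hfree⟩ := mem_freeLinks.1 hf
  refine ⟨v f l, hfree, fun j hjl g hg => ?_⟩
  rcases ne_or_eq i j with hij | rfl
  · exact (hfi.apply_eq_of_isFree hg he hP hij hjl.symm hfree).symm
  · obtain ⟨k, hki, hkl⟩ : ∃ k, k ≠ i ∧ k ≠ l :=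
      Fin.exists_ne_and_ne_of_two_lt i l (by omega)
    obtain ⟨h, hh⟩ := hne k hkl
    have hfh : v f l = v h l := hfi.apply_eq_of_isFree hh he hP hki.symm hkl.symm hfree
    rw [hfh]
    exact (hh.apply_eq_of_isFree hg he hP hki hjl.symm (hfh ▸ hfree)).symm

/-- Otherwise `e` and the three free vertices would span a tile. -/
lemma IsOptimalPacking.exists_freeLinks_eq_empty (hP : IsOptimalPacking v N T) (he : e ∈ N)
    (hne : ∀ i, ∃ f, IsLink v N T e i f) : ∃ l, freeLinks v N T e l = ∅ := by
  classical
  by_contra! hfree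
  choose x hx hgx using fun l => hP.exists_forall_apply_eq he (hfree l) fun j _ => hne j
  have htile : IsTile v fun i b => if b then x i else v e i := by
    refine isTile_of_edges (fun i => ((hx i).ne_single he).symm) fun i => ?_
    obtain ⟨f, hf⟩ := hne i
    exact ⟨f, hf.apply_eq, fun j hj => hgx j i hj.symm f hf⟩
  have hdisj : ∀ D ∈ T, TileDisjoint (fun i b => if b then x i else v e i) D := by
    rintro D hD i (_ | _) b'
    · exact hP.edge_ne_tile e he D hD i b'
    · exact (hx i).ne_tile hD b'
  have hP' := hP.insert_tile (erase_subset e N) htile hdisj (by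
    rintro e' he' i (_ | _)
    · exact hP.isEdgeMatching (mem_of_mem_erase he') he (ne_of_mem_erase he') i
    · exact ((hx i).ne_single (mem_of_mem_erase he')).symm)
  have hnotMem : (fun i b => if b then x i else v e i) ∉ T := fun h => hdisj _ h 0 false false rfl
  have hcard := card_insert_of_notMem hnotMem
  have := card_erase_add_one he
  have := hP.card_tiles_le _ _ hP' (by omega)
  omega

lemma IsMaximumPacking.card_freeLinks_le (hP : IsMaximumPacking v N T) (he : e ∈ N)
    (hdeg : ∀ i x, #{f | v f i = x} ≤ r) (l : Fin 3) : #(freeLinks v N T e l) ≤ r := by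
  suffices ∃ i x, ∀ f ∈ freeLinks v N T e l, v f i = x by
    obtain ⟨i, x, h⟩ := this
    exact (card_le_card fun f hf => by simpa using h f hf).trans (hdeg i x)
  by_cases hne : (freeLinks v N T e l).Nonempty ∧ ∀ j, j ≠ l → ∃ g, IsLink v N T e j g
  · obtain ⟨x, -, hx⟩ := hP.exists_forall_apply_eq he hne.1 hne.2
    refine ⟨l, x, fun f hf => ?_⟩
    obtain ⟨⟨i, hi⟩, hfree⟩ := mem_freeLinks.1 hf
    exact hx i (hi.ne_of_isFree he hfree).symm f hi
  · rcases (freeLinks v N T e l).eq_empty_or_nonempty with hempty | hnonempty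
    · exact ⟨0, v e 0, by simp [hempty]⟩
    · push Not at hne
      obtain ⟨j, hjl, hj⟩ := hne hnonempty
      obtain ⟨k, hkl, hkj⟩ : ∃ k, k ≠ l ∧ k ≠ j :=
        Fin.exists_ne_and_ne_of_two_lt l j (by omega)
      refine ⟨k, v e k, fun f hf => ?_⟩
      obtain ⟨⟨i, hi⟩, hfree⟩ := mem_freeLinks.1 hf
      have hil := hi.ne_of_isFree he hfree
      have hij : i ≠ j := fun h => hj f (h ▸ hi)
      obtain rfl : i = k := by omega
      exact hi.apply_eq

lemma IsMaximumPacking.sum_erase_card_freeLinks_le (hP : IsMaximumPacking v N T) (he : e ∈ N)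
    (hdeg : ∀ i x, #{f | v f i = x} ≤ r) (hne : ∀ l, (freeLinks v N T e l).Nonempty)
    {m : Fin 3} (hm : ∀ f, ¬ IsLink v N T e m f) :
    ∑ l ∈ univ.erase m, #(freeLinks v N T e l) ≤ r := by
  classical
  have hlink : ∀ l, ∀ f ∈ freeLinks v N T e l, ∃ j, j ≠ m ∧ j ≠ l ∧ IsLink v N T e j f := by
    intro l f hf
    obtain ⟨⟨j, hj⟩, hfree⟩ := mem_freeLinks.1 hf
    exact ⟨j, fun h => hm f (h ▸ hj), (hj.ne_of_isFree he hfree).symm, hj⟩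
  have hlinks : ∀ j, j ≠ m → ∃ g, IsLink v N T e j g := by
    intro j hjm
    obtain ⟨l, hlm, hlj⟩ : ∃ l, l ≠ m ∧ l ≠ j :=
      Fin.exists_ne_and_ne_of_two_lt m j (by omega)
    obtain ⟨f, hf⟩ := hne l
    obtain ⟨k, hkm, hkl, hk⟩ := hlink l f hf
    obtain rfl : k = j := by omega
    exact ⟨f, hk⟩
  obtain ⟨x, -, hx⟩ := hP.exists_forall_apply_eq he (hne m) hlinks
  have hdisj : Set.PairwiseDisjoint (univ.erase m : Finset (Fin 3)) (freeLinks v N T e) := by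
    refine fun l hl l' hl' hll' => disjoint_left.2 fun f hf hf' => ?_
    obtain ⟨j, hjm, hjl, hj⟩ := hlink l f hf
    have hl'j : l' ≠ j := hj.ne_of_isFree he (mem_freeLinks.1 hf').2
    have hlm : l ≠ m := ne_of_mem_erase hl
    have hl'm : l' ≠ m := ne_of_mem_erase hl'
    omega
  rw [← card_biUnion hdisj]
  refine (card_le_card fun f hf => ?_).trans (hdeg m x)
  obtain ⟨l, -, hfl⟩ := mem_biUnion.1 hf
  obtain ⟨j, hjm, -, hj⟩ := hlink l f hfl
  simpa using hx j hjm f hj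

lemma IsOptimalPacking.sum_card_freeLinks_le (hP : IsOptimalPacking v N T) (he : e ∈ N)
    (hdeg : ∀ i x, #{f | v f i = x} ≤ r) : ∑ l, #(freeLinks v N T e l) ≤ 2 * r := by
  have hle := hP.card_freeLinks_le he hdeg
  by_cases hne : ∀ l, (freeLinks v N T e l).Nonempty
  · obtain ⟨m, hm⟩ : ∃ m, ∀ f, ¬ IsLink v N T e m f := by
      by_contra! hlinks
      obtain ⟨l, hl⟩ := hP.exists_freeLinks_eq_empty he hlinks
      exact (hne l).ne_empty hl
    have := hP.sum_erase_card_freeLinks_le he hdeg hne hm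
    rw [← add_sum_erase _ _ (mem_univ m)]
    linarith [hle m]
  · simp only [not_forall, not_nonempty_iff_eq_empty] at hne
    obtain ⟨m, hm⟩ := hne
    have := sum_le_card_nsmul (univ.erase m) _ r fun l _ => hle l
    rw [← add_sum_erase _ _ (mem_univ m), hm]
    simpa using this

lemma sum_meetCount_le (hdeg : ∀ i x, #{f | v f i = x} ≤ r) (X : Fin 3 → Finset V) :
    ∑ f, meetCount v X f ≤ r * ∑ i, #(X i) := by
  have hswap : ∑ f, meetCount v X f = ∑ i, #{f | v f i ∈ X i} :=
    sum_card_bipartiteAbove_eq_sum_card_bipartiteBelow fun f i => v f i ∈ X i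
  rw [hswap, mul_sum]
  refine sum_le_sum fun i _ => card_le_mul_card_image_of_maps_to (f := (v · i))
    (fun f hf => (mem_filter.1 hf).2) r fun x _ => ?_
  exact (card_le_card (filter_subset_filter _ (subset_univ _))).trans (hdeg i x)

open Classical in
lemma IsLink.card_isFree_le {f : E} {i : Fin 3} (hf : IsLink v N T e i f) (he : e ∈ N) :
    #{l | IsFree v N T l (v f l)} ≤ ∑ e ∈ N, #{l | f ∈ freeLinks v N T e l} := by
  refine le_trans ?_ (single_le_sum_of_canonicallyOrdered he)
  exact card_le_card fun l hl => by simpa using mem_freeLinks.2 ⟨⟨i, hf⟩, by simpa using hl⟩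

open Classical in
lemma IsMaximumPacking.four_le_of_not_isTileEdge (hP : IsMaximumPacking v N T) {f : E}
    (hf : ∀ C ∈ T, ¬ IsTileEdge v C f) :
    4 ≤ 2 * meetCount v (singleVertices v N) f + meetCount v (tileVertices T) f +
      ∑ e ∈ N, #{l | f ∈ freeLinks v N T e l} := by
  obtain ⟨e, he, i, hi⟩ := hP.exists_mem_single_of_not_isTileEdge hf
  have hpos : 0 < meetCount v (singleVertices v N) f :=
    card_pos.2 ⟨i, by simpa using mem_singleVertices.2 ⟨e, he, hi.symm⟩⟩
  have hthree := three_le_meetCount_add v N T f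
  by_cases hone : meetCount v (singleVertices v N) f ≤ 1
  · rcases ({l | IsFree v N T l (v f l)} : Finset (Fin 3)).eq_empty_or_nonempty with hfree | ⟨l, hl⟩
    · rw [hfree, card_empty] at hthree
      omega
    · have hlink := isLink_of_meetCount_le_one he hi hone ⟨l, by simpa using hl⟩
      have := hlink.card_isFree_le he
      omega
  · omega

open Classical in
lemma IsMaximumPacking.four_le_weight (hP : IsMaximumPacking v N T) (f : E) :
    4 + (if f ∈ N then 1 else 0) ≤ (if ∃ C ∈ T, IsTileEdge v C f then 1 else 0) +
      (2 * meetCount v (singleVertices v N) f + meetCount v (tileVertices T) f +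
        ∑ e ∈ N, #{l | f ∈ freeLinks v N T e l}) := by
  by_cases hf : ∃ C ∈ T, IsTileEdge v C f
  · rw [if_pos hf]
    obtain ⟨C, hC, s, -, hs⟩ := hf
    have hfN : f ∉ N := fun h => hP.edge_ne_tile f h C hC 0 _ (hs 0)
    rw [if_neg hfN, meetCount_eq_three (X := tileVertices T) fun i =>
      mem_tileVertices.2 ⟨C, hC, s i, (hs i).symm⟩]
    omega
  · rw [if_neg hf, zero_add]
    by_cases hfN : f ∈ N
    · rw [if_pos hfN, meetCount_eq_three (X := singleVertices v N) fun i =>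
        mem_singleVertices.2 ⟨f, hfN, rfl⟩]
      omega
    · rw [if_neg hfN]
      exact hP.four_le_of_not_isTileEdge fun C hC h => hf ⟨C, hC, h⟩

section TileEdges

variable {C : Fin 3 → Bool → V}

lemma card_filter_add_card_filter_le (hdeg : ∀ i x, #{f | v f i = x} ≤ r)
    (hC : ∀ i, (C i).Injective) {s t : Fin 3 → Bool} (hst : s ≠ t) (h : ∃ i, s i = t i) :
    #{f | ∀ i, v f i = C i (s i)} + #{f | ∀ i, v f i = C i (t i)} ≤ r := by
  classical
  obtain ⟨i, hi⟩ := h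
  rw [← card_union_of_disjoint]
  · refine (card_le_card fun f hf => ?_).trans (hdeg i (C i (s i)))
    simp only [mem_union, mem_filter, mem_univ, true_and] at hf ⊢
    exact hf.elim (· i) fun hf => hi ▸ hf i
  · refine disjoint_filter.2 fun f _ hs ht => hst ?_
    exact funext fun j => hC j ((hs j).symm.trans (ht j))

open Classical in
/-- Two of the four edges of a tile share a vertex, so `2 * r` tile edges force all four
multiplicities to be `r / 2`. -/
lemma card_isTileEdge_lt (hdeg : ∀ i x, #{f | v f i = x} ≤ r) (hC : ∀ i, (C i).Injective)
    (hfree : ∃ s, IsEvenPattern s ∧ 2 * #{f | ∀ i, v f i = C i (s i)} ≠ r) :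
    #{f | IsTileEdge v C f} < 2 * r := by
  let mult : (Fin 3 → Bool) → ℕ := fun s => #{f | ∀ i, v f i = C i (s i)}
  have hunion : #{f | IsTileEdge v C f} ≤ ∑ s with IsEvenPattern s, mult s := by
    refine (card_le_card fun f hf => ?_).trans card_biUnion_le
    simpa [IsTileEdge] using (mem_filter.1 hf).2
  have hpatterns : ∑ s with IsEvenPattern s, mult s = mult ![false, false, false] +
      mult ![false, true, true] + mult ![true, false, true] + mult ![true, true, false] := by
    have : ({s | IsEvenPattern s} : Finset (Fin 3 → Bool)) = {![false, false, false],
        ![false, true, true], ![true, false, true], ![true, true, false]} := by decide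
    rw [this]
    simp [add_assoc]
  have hpair : ∀ s t, s ≠ t → (∃ i, s i = t i) → mult s + mult t ≤ r := fun s t =>
    card_filter_add_card_filter_le hdeg hC
  have h01 := hpair ![false, false, false] ![false, true, true] (by decide) (by decide)
  have h02 := hpair ![false, false, false] ![true, false, true] (by decide) (by decide)
  have h03 := hpair ![false, false, false] ![true, true, false] (by decide) (by decide)
  have h12 := hpair ![false, true, true] ![true, false, true] (by decide) (by decide)
  have h13 := hpair ![false, true, true] ![true, true, false] (by decide) (by decide)
  have h23 := hpair ![true, false, true] ![true, true, false] (by decide) (by decide)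
  obtain ⟨s, hs, hsr⟩ := hfree
  change 2 * mult s ≠ r at hsr
  rcases hs.eq_or with rfl | rfl | rfl | rfl <;> omega

end TileEdges

open Classical in
lemma IsOptimalPacking.sum_sum_card_freeLinks_le (hP : IsOptimalPacking v N T)
    (hdeg : ∀ i x, #{f | v f i = x} ≤ r) :
    ∑ f, ∑ e ∈ N, #{l | f ∈ freeLinks v N T e l} ≤ #N * (2 * r) := by
  have hswap : ∀ e, ∑ f, #{l | f ∈ freeLinks v N T e l} = ∑ l, #(freeLinks v N T e l) := by
    intro e
    simpa [bipartiteAbove, bipartiteBelow] using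
      sum_card_bipartiteAbove_eq_sum_card_bipartiteBelow (s := univ) (t := univ)
        fun f l => f ∈ freeLinks v N T e l
  rw [sum_comm]
  simp only [hswap]
  exact sum_le_card_nsmul N _ _ fun e he => hP.sum_card_freeLinks_le he hdeg

open Classical in
lemma card_tileEdges_add_card_le (hdeg : ∀ i x, #{f | v f i = x} ≤ r)
    (hfree : ∀ C, IsTile v C → ∃ s, IsEvenPattern s ∧ 2 * #{f | ∀ i, v f i = C i (s i)} ≠ r)
    (hT : ∀ C ∈ T, IsTile v C) : #{f | ∃ C ∈ T, IsTileEdge v C f} + #T ≤ #T * (2 * r) := by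
  have hunion : #{f | ∃ C ∈ T, IsTileEdge v C f} ≤ ∑ C ∈ T, #{f | IsTileEdge v C f} := by
    refine (card_le_card fun f hf => ?_).trans card_biUnion_le
    simpa using hf
  calc #{f | ∃ C ∈ T, IsTileEdge v C f} + #T
      ≤ ∑ C ∈ T, (#{f | IsTileEdge v C f} + 1) := by
        simpa only [sum_add_distrib, sum_const, smul_eq_mul, mul_one] using
          Nat.add_le_add_right hunion #T
    _ ≤ #T * (2 * r) := sum_le_card_nsmul _ _ _ fun C hC =>
        card_isTileEdge_lt hdeg (hT C hC).injective (hfree C (hT C hC))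

lemma sum_meetCount_singleVertices_le (hdeg : ∀ i x, #{f | v f i = x} ≤ r) (N : Finset E) :
    ∑ f, meetCount v (singleVertices v N) f ≤ 3 * r * #N := by
  have hcard := sum_le_card_nsmul univ _ #N fun i _ => card_singleVertices_le (v := v) (N := N) i
  calc ∑ f, meetCount v (singleVertices v N) f
      ≤ r * ∑ i, #(singleVertices v N i) := sum_meetCount_le hdeg _
    _ ≤ r * (3 * #N) := Nat.mul_le_mul_left r hcard
    _ = 3 * r * #N := by ring

lemma sum_meetCount_tileVertices_le (hdeg : ∀ i x, #{f | v f i = x} ≤ r)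
    (T : Finset (Fin 3 → Bool → V)) :
    ∑ f, meetCount v (tileVertices T) f ≤ 6 * r * #T := by
  have hcard := sum_le_card_nsmul univ _ (2 * #T) fun i _ => card_tileVertices_le (T := T) i
  calc ∑ f, meetCount v (tileVertices T) f
      ≤ r * ∑ i, #(tileVertices T i) := sum_meetCount_le hdeg _
    _ ≤ r * (3 * (2 * #T)) := Nat.mul_le_mul_left r hcard
    _ = 6 * r * #T := by ring

theorem exists_isEdgeMatching_four_mul_card_le (hdeg : ∀ i x, #{f | v f i = x} ≤ r)
    (hfree : ∀ C, IsTile v C → ∃ s, IsEvenPattern s ∧ 2 * #{f | ∀ i, v f i = C i (s i)} ≠ r) :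
    ∃ M, IsEdgeMatching v M ∧ 4 * Fintype.card E ≤ (8 * r - 1) * #M := by
  classical
  obtain ⟨N, T, hP⟩ := exists_isOptimalPacking v
  obtain ⟨M, hM, hcard⟩ := hP.exists_isEdgeMatching_card_eq
  refine ⟨M, hM, ?_⟩
  have hweight := sum_le_sum fun f (_ : f ∈ univ) => hP.four_le_weight f
  simp only [sum_add_distrib, ← mul_sum, sum_const, smul_eq_mul, card_univ, sum_boole,
    filter_univ_mem, Nat.cast_id] at hweight
  have hsingle := sum_meetCount_singleVertices_le hdeg N
  have htile := sum_meetCount_tileVertices_le hdeg T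
  have hlinks := hP.sum_sum_card_freeLinks_le hdeg
  have htileEdges := card_tileEdges_add_card_le hdeg hfree hP.isTile
  rw [Nat.sub_mul, one_mul, hcard]
  refine Nat.le_sub_of_add_le ?_
  linarith

end Count

end Packing

section Transfer

open Finset

variable {α β γ : Type*}

/-- The vertices of an edge, with all three classes embedded in their disjoint union. -/
def vertex (e : α × β × γ) : Fin 3 → α ⊕ β ⊕ γ :=
  ![.inl e.1, .inr (.inl e.2.1), .inr (.inr e.2.2)]

lemma vertex_injective : Function.Injective (vertex : α × β × γ → Fin 3 → α ⊕ β ⊕ γ) := by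
  rintro ⟨a, b, c⟩ ⟨a', b', c'⟩ h
  simpa [vertex] using h

lemma edgeDisjoint_vertex_iff {e f : α × β × γ} :
    EdgeDisjoint vertex e f ↔ e.1 ≠ f.1 ∧ e.2.1 ≠ f.2.1 ∧ e.2.2 ≠ f.2.2 := by
  simp [EdgeDisjoint, vertex, Fin.forall_fin_succ]

lemma IsMatching.card_le_matchNum {H : Multiset (α × β × γ)} {M : Finset (α × β × γ)}
    (hM : IsMatching H M) : #M ≤ matchNum H :=
  le_csSup ⟨H.card, by
    rintro _ ⟨M, hM, rfl⟩
    exact Multiset.card_le_card ((Multiset.le_iff_subset M.nodup).2 hM.1)⟩ ⟨M, hM, rfl⟩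

lemma card_filter_coe {δ : Type*} [DecidableEq δ] (H : Multiset δ) (p : δ → Prop)
    [DecidablePred p] : #{f : H | p f.1} = (H.filter p).card := by
  conv_rhs => rw [← Multiset.map_univ_coe H, Multiset.filter_map, Multiset.card_map]
  rfl

lemma mem_fanoEdges_iff {a : Bool → α} {b : Bool → β} {c : Bool → γ} {e : α × β × γ} :
    e ∈ fanoEdges (a false) (a true) (b false) (b true) (c false) (c true) ↔
      ∃ s, IsEvenPattern s ∧ (a (s 0), b (s 1), c (s 2)) = e := by
  constructor
  · intro he
    simp only [fanoEdges, Multiset.insert_eq_cons, Multiset.mem_cons, Multiset.mem_singleton] at he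
    rcases he with rfl | rfl | rfl | rfl
    · exact ⟨![false, false, false], by decide, rfl⟩
    · exact ⟨![false, true, true], by decide, rfl⟩
    · exact ⟨![true, false, true], by decide, rfl⟩
    · exact ⟨![true, true, false], by decide, rfl⟩
  · rintro ⟨s, hs, rfl⟩
    rcases hs.eq_or with rfl | rfl | rfl | rfl <;> simp [fanoEdges]

variable [DecidableEq α] [DecidableEq β] [DecidableEq γ] {H : Multiset (α × β × γ)}

lemma IsEdgeMatching.isMatching_image {M : Finset H}
    (hM : IsEdgeMatching (fun f : H => vertex f.1) M) :
    IsMatching H (M.image fun f => f.1) := by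
  refine ⟨forall_mem_image.2 fun f _ => Multiset.coe_mem, ?_⟩
  simp only [forall_mem_image]
  exact fun e he f hf hef => edgeDisjoint_vertex_iff.1 (hM he hf fun h => hef (by rw [h]))

lemma IsEdgeMatching.card_le_matchNum {M : Finset H}
    (hM : IsEdgeMatching (fun f : H => vertex f.1) M) : #M ≤ matchNum H := by
  have hinj : Set.InjOn (fun f : H => f.1) M := by
    refine fun e he f hf hef => by_contra fun hne => ?_
    exact hM he hf hne 0 (congrArg (vertex · 0) hef)
  rw [← card_image_of_injOn hinj]
  exact hM.isMatching_image.card_le_matchNum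

lemma card_filter_vertex_apply_le {r : ℕ} (h1 : ∀ a, deg1 H a ≤ r) (h2 : ∀ b, deg2 H b ≤ r)
    (h3 : ∀ c, deg3 H c ≤ r) (i : Fin 3) (x : α ⊕ β ⊕ γ) :
    #{f : H | vertex f.1 i = x} ≤ r := by
  rw [card_filter_coe H fun f => vertex f i = x]
  fin_cases i
  · rcases x with a | _
    · simpa [vertex, deg1] using h1 a
    · simp [vertex]
  · rcases x with _ | b | _
    · simp [vertex]
    · simpa [vertex, deg2] using h2 b
    · simp [vertex]
  · rcases x with _ | _ | c
    · simp [vertex]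
    · simp [vertex]
    · simpa [vertex, deg3] using h3 c

lemma isFanoCopy_of_le_count {s : ℕ} {x1 y1 : α} {x2 y2 : β}
    {x3 y3 : γ} (h1 : x1 ≠ y1) (h2 : x2 ≠ y2) (h3 : x3 ≠ y3)
    (h : ∀ e ∈ fanoEdges x1 y1 x2 y2 x3 y3, s ≤ H.count e) :
    IsFanoCopy H s x1 y1 x2 y2 x3 y3 := by
  have hnodup : (fanoEdges x1 y1 x2 y2 x3 y3).Nodup := by
    simp [fanoEdges, h1, h2, h3, h2.symm, h3.symm]
  refine ⟨h1, h2, h3, Multiset.le_iff_count.2 fun e => ?_⟩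
  rw [Multiset.count_nsmul]
  by_cases he : e ∈ fanoEdges x1 y1 x2 y2 x3 y3
  · rw [Multiset.count_eq_one_of_mem hnodup he, mul_one]
    exact h e he
  · rw [Multiset.count_eq_zero_of_notMem he, mul_zero]
    exact Nat.zero_le _

lemma IsTile.exists_eq_vertex {C : Fin 3 → Bool → α ⊕ β ⊕ γ}
    (hC : IsTile (fun f : H => vertex f.1) C) :
    ∃ (a : Bool → α) (b : Bool → β) (c : Bool → γ), a.Injective ∧ b.Injective ∧ c.Injective ∧
      ∀ s : Fin 3 → Bool, vertex (a (s 0), b (s 1), c (s 2)) = fun i => C i (s i) := by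
  have hedge : ∀ i p, ∃ e : α × β × γ, vertex e i = C i p := by
    intro i p
    obtain ⟨s, hs, rfl⟩ := exists_isEvenPattern_apply_eq i p
    obtain ⟨f, hf⟩ := hC.exists_edge s hs
    exact ⟨f.1, hf i⟩
  choose e he using hedge
  have hinj : ∀ i p q, vertex (e i p) i = vertex (e i q) i → p = q := fun i p q h =>
    hC.injective i (by rwa [he, he] at h)
  refine ⟨fun p => (e 0 p).1, fun p => (e 1 p).2.1, fun p => (e 2 p).2.2,
    fun p q h => hinj 0 p q (by simpa [vertex] using h),
    fun p q h => hinj 1 p q (by simpa [vertex] using h),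
    fun p q h => hinj 2 p q (by simpa [vertex] using h), fun s => funext fun i => ?_⟩
  rw [← he]
  fin_cases i <;> rfl

lemma IsTile.exists_two_mul_card_ne {r : ℕ} {C : Fin 3 → Bool → α ⊕ β ⊕ γ}
    (hC : IsTile (fun f : H => vertex f.1) C)
    (hfree : ¬ ∃ (s : ℕ) (x1 y1 : α) (x2 y2 : β) (x3 y3 : γ),
      2 * s = r ∧ IsFanoCopy H s x1 y1 x2 y2 x3 y3) :
    ∃ s, IsEvenPattern s ∧ 2 * #{f : H | ∀ i, vertex f.1 i = C i (s i)} ≠ r := by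
  by_contra! hall
  obtain ⟨a, b, c, ha, hb, hc, habc⟩ := hC.exists_eq_vertex
  have hcount : ∀ s, IsEvenPattern s → 2 * H.count (a (s 0), b (s 1), c (s 2)) = r := by
    intro s hs
    simp only [← hall s hs, ← funext_iff, ← habc, vertex_injective.eq_iff]
    rw [Multiset.count_eq_card_filter_eq,
      card_filter_coe H fun f => f = (a (s 0), b (s 1), c (s 2))]
    simp only [eq_comm]
  refine hfree ⟨H.count (a false, b false, c false), _, _, _, _, _, _,
    hcount ![false, false, false] (by decide), isFanoCopy_of_le_count (ha.ne Bool.false_ne_true)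
    (hb.ne Bool.false_ne_true) (hc.ne Bool.false_ne_true) fun e he => ?_⟩
  obtain ⟨s, hs, rfl⟩ := mem_fanoEdges_iff.1 he
  have h := hcount s hs
  have h0 : 2 * H.count (a false, b false, c false) = r :=
    hcount ![false, false, false] (by decide)
  omega

lemma IsRegular.card_eq [Fintype α] {r : ℕ} (hH : IsRegular H r) :
    H.card = r * Fintype.card α := by
  have hfiber : ∀ a, #{f : H | f.1.1 = a} = r := fun a =>
    (card_filter_coe H fun f => f.1 = a).trans (hH.1 a)
  rw [← Multiset.card_coe, ← card_univ, card_eq_sum_card_fiberwise (f := fun f : H => f.1.1)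
    (t := univ) (by simp)]
  simp [hfiber, mul_comm]

end Transfer

lemma one_add_one_div_mul_div_two_le {r n k : ℕ} (hr : 2 ≤ r) (h : 4 * (r * n) ≤ (8 * r - 1) * k) :
    (1 + 1 / (22 * (r : ℝ) - 77 / 3)) * n / 2 ≤ k := by
  have hr' : (2 : ℝ) ≤ r := mod_cast hr
  have hpos : 0 < 8 * (r : ℝ) - 1 := by linarith
  have hcast : 4 * ((r : ℝ) * n) ≤ (8 * r - 1) * k := by
    rw [Nat.sub_mul, one_mul, Nat.le_sub_iff_add_le (Nat.le_mul_of_pos_left k (by omega))] at h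
    have : 4 * ((r : ℝ) * n) + k ≤ 8 * r * k := mod_cast h
    linarith
  calc (1 + 1 / (22 * (r : ℝ) - 77 / 3)) * n / 2 ≤ (1 + 1 / (8 * r - 1)) * n / 2 := by
        gcongr (1 + 1 / ?_) * _ / _
        linarith
    _ = 4 * (r * n) / (8 * r - 1) := by
        field_simp
        ring
    _ ≤ k := (div_le_iff₀' hpos).2 hcast

theorem stmt8_general {α β γ : Type*} [DecidableEq α] [DecidableEq β] [DecidableEq γ]
    (H : Multiset (α × β × γ)) (r : ℕ)
    (h1 : ∀ a, deg1 H a ≤ r) (h2 : ∀ b, deg2 H b ≤ r) (h3 : ∀ c, deg3 H c ≤ r)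
    (hfree : ¬ ∃ (s : ℕ) (x1 y1 : α) (x2 y2 : β) (x3 y3 : γ),
      2 * s = r ∧ IsFanoCopy H s x1 y1 x2 y2 x3 y3) :
    4 * H.card ≤ (8 * r - 1) * matchNum H := by
  have hdeg := card_filter_vertex_apply_le h1 h2 h3
  obtain ⟨M, hM, hcard⟩ :=
    exists_isEdgeMatching_four_mul_card_le hdeg fun C hC => hC.exists_two_mul_card_ne hfree
  rw [← Multiset.card_coe]
  exact hcard.trans (Nat.mul_le_mul_left _ hM.card_le_matchNum)

/-- If `H` is an `r`-regular 3-partite 3-graph (`r ≥ 2`) with `n` vertices in each class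
containing no copy of `(r/2) • F`, then `ν(H) ≥ (1 + 1/(22r − 77/3))·n/2`. -/
theorem stmt8 {α β γ : Type*} [Fintype α] [Fintype β] [Fintype γ]
    [DecidableEq α] [DecidableEq β] [DecidableEq γ]
    (H : Multiset (α × β × γ)) (n r : ℕ) (hr : 2 ≤ r)
    (hreg : IsRegular H r)
    (hA : Fintype.card α = n) (hB : Fintype.card β = n) (hC : Fintype.card γ = n)
    (hfree : ¬ ∃ (s : ℕ) (x1 y1 : α) (x2 y2 : β) (x3 y3 : γ),
      2 * s = r ∧ IsFanoCopy H s x1 y1 x2 y2 x3 y3) :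
    (1 + 1 / (22 * (r : ℝ) - 77 / 3)) * n / 2 ≤ (matchNum H : ℝ) := by
  refine one_add_one_div_mul_div_two_le hr ?_
  have key := stmt8_general H r (fun a => (hreg.1 a).le) (fun b => (hreg.2.1 b).le)
    (fun c => (hreg.2.2 c).le) hfree
  rwa [hreg.card_eq, hA] at key

end Tripartite
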